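/- Let 1 ≤ p ≤ ∞, let n, m ≥ 1, let u : M_n → M_m be a linear map, and let a ∈ M_n ⊗ M_m. Then |T((u ⊗ id_{M_m})(a))| ≤ ρ_p(a) · ‖u‖_r, where ‖u‖_r is the regular norm of u relative to p. (The claim established in the proof of Theorem 3.2.) -/

import Mathlib

open scoped Kronecker ENNReal Classical ComplexOrder
open Matrix

noncomputable section

/-- The operator norm (`S_∞` norm) of a complex matrix, acting on Euclidean space. -/
def opNorm {ι : Type} [Fintype ι] [DecidableEq ι] (a : Matrix ι ι ℂ) : ℝ :=
  ‖LinearMap.toContinuousLinearMap (Matrix.toEuclideanLin a)‖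

/-- The Schatten `p`-norm of a complex matrix: the `ℓ^p` norm of its singular values
(the square roots of the eigenvalues of `aᴴ * a`); for `p = ∞` it is the operator norm. -/
def schattenNorm {ι : Type} [Fintype ι] [DecidableEq ι] (p : ℝ≥0∞) (a : Matrix ι ι ℂ) : ℝ :=
  if p = ∞ then opNorm a
  else (∑ i, Real.sqrt ((Matrix.posSemidef_conjTranspose_mul_self a).isHermitian.eigenvalues i) ^ p.toReal)
      ^ (1 / p.toReal)

/-- Pisier's vector-valued Schatten norm `‖x‖_{S_p^N[M_n]}` on `M_N ⊗ M_n`: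
the infimum of `‖a‖_{S_{2p}} ‖y‖_{S_∞} ‖b‖_{S_{2p}}` over factorizations
`x = (a ⊗ 1) · y · (b ⊗ 1)`. -/
def pisierNorm (p : ℝ≥0∞) {N n : ℕ} (x : Matrix (Fin N × Fin n) (Fin N × Fin n) ℂ) : ℝ :=
  sInf { r | ∃ (a b : Matrix (Fin N) (Fin N) ℂ)
      (y : Matrix (Fin N × Fin n) (Fin N × Fin n) ℂ),
      x = (a ⊗ₖ (1 : Matrix (Fin n) (Fin n) ℂ)) * y * (b ⊗ₖ (1 : Matrix (Fin n) (Fin n) ℂ)) ∧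
      r = schattenNorm (2 * p) a * opNorm y * schattenNorm (2 * p) b }

/-- The amplification `u ⊗ id_{M_n} : M_N ⊗ M_n → M_m ⊗ M_n` of a map `u : M_N → M_m`,
acting as `u` on each `M_n`-block entry. -/
def amp {N m n : ℕ} (u : Matrix (Fin N) (Fin N) ℂ → Matrix (Fin m) (Fin m) ℂ)
    (x : Matrix (Fin N × Fin n) (Fin N × Fin n) ℂ) : Matrix (Fin m × Fin n) (Fin m × Fin n) ℂ :=
  Matrix.of fun ik jl => u (Matrix.of fun i j => x (i, ik.2) (j, jl.2)) ik.1 jl.1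

/-- The amplification `id_{M_n} ⊗ u : M_n ⊗ M_N → M_n ⊗ M_m` of a map `u : M_N → M_m`. -/
def ampLeft {n N m : ℕ} (u : Matrix (Fin N) (Fin N) ℂ → Matrix (Fin m) (Fin m) ℂ)
    (x : Matrix (Fin n × Fin N) (Fin n × Fin N) ℂ) : Matrix (Fin n × Fin m) (Fin n × Fin m) ℂ :=
  Matrix.of fun ki lj => u (Matrix.of fun i j => x (ki.1, i) (lj.1, j)) ki.2 lj.2

/-- The trace pairing `T : M_k ⊗ M_k → ℂ`, with `T(a ⊗ b) = tr(ᵗa·b)`; writing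
`z` as a `k×k` matrix of blocks `z_{ij} ∈ M_k`, `T(z) = Σ_{i,j} (z_{ij})_{ij}`. -/
def tracePair {k : ℕ} (z : Matrix (Fin k × Fin k) (Fin k × Fin k) ℂ) : ℂ :=
  ∑ i : Fin k, ∑ j : Fin k, z (i, i) (j, j)

/-- A map `u : M_N → M_m` is completely positive if all its amplifications
`id_{M_n} ⊗ u` preserve positive semidefiniteness. -/
def CompletelyPositive {N m : ℕ}
    (u : Matrix (Fin N) (Fin N) ℂ → Matrix (Fin m) (Fin m) ℂ) : Prop :=
  ∀ (n : ℕ) (x : Matrix (Fin n × Fin N) (Fin n × Fin N) ℂ),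
    x.PosSemidef → (ampLeft u x).PosSemidef

/-- The regular norm (relative to `p`) of `u : M_N → M_m`: the supremum in `[0,∞]`
over `n ≥ 1` of the norms of the amplifications `u ⊗ id_{M_n}` from
`(M_N ⊗ M_n, ‖·‖_{S_p^N[M_n]})` to `(M_m ⊗ M_n, ‖·‖_{S_p^m[M_n]})`. -/
def regNorm (p : ℝ≥0∞) {N m : ℕ}
    (u : Matrix (Fin N) (Fin N) ℂ → Matrix (Fin m) (Fin m) ℂ) : ℝ≥0∞ :=
  ⨆ (n : ℕ) (x : Matrix (Fin N × Fin (n + 1)) (Fin N × Fin (n + 1)) ℂ)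
    (_ : pisierNorm p x ≤ 1), ENNReal.ofReal (pisierNorm p (amp u x))

/-- Pisier's norm `ρ_p` on `M_n ⊗ M_m` (with `q` the conjugate exponent `p'`):
the infimum of `‖γ‖_{S_{2p}} ‖α‖_{S_{2p'}} ‖g‖_{S_∞} ‖δ‖_{S_{2p}} ‖β‖_{S_{2p'}}`
over factorizations `a = (γ ⊗ α) · g · (δ ⊗ β)`. -/
def rho (p q : ℝ≥0∞) {n m : ℕ} (a : Matrix (Fin n × Fin m) (Fin n × Fin m) ℂ) : ℝ :=
  sInf { r | ∃ (γ δ : Matrix (Fin n) (Fin n) ℂ) (α β : Matrix (Fin m) (Fin m) ℂ)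
      (g : Matrix (Fin n × Fin m) (Fin n × Fin m) ℂ),
      a = (γ ⊗ₖ α) * g * (δ ⊗ₖ β) ∧
      r = schattenNorm (2 * p) γ * schattenNorm (2 * q) α * opNorm g *
          schattenNorm (2 * p) δ * schattenNorm (2 * q) β }

/-- The amplification `u ⊗ id_{M_n}` of a map `u` defined only on a subspace `S ⊆ M_N`,
applied to an element of `M_N ⊗ M_n` all of whose `M_N`-valued block entries lie in `S`. -/
def ampOn {N m n : ℕ} (S : Submodule ℂ (Matrix (Fin N) (Fin N) ℂ))
    (u : S →ₗ[ℂ] Matrix (Fin m) (Fin m) ℂ)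
    (x : Matrix (Fin N × Fin n) (Fin N × Fin n) ℂ)
    (h : ∀ k l : Fin n, (Matrix.of fun i j => x (i, k) (j, l)) ∈ S) :
    Matrix (Fin m × Fin n) (Fin m × Fin n) ℂ :=
  Matrix.of fun ik jl => u ⟨Matrix.of fun i j => x (i, ik.2) (j, jl.2), h ik.2 jl.2⟩ ik.1 jl.1

end

/-- Hölder's inequality weighted by a doubly stochastic matrix. -/
lemma sum_mul_mul_doublyStochastic_le {ι : Type} [Fintype ι] {p q : ℝ}
    (hpq : p.HolderConjugate q) {w : ι → ι → ℝ}
    (hw : ∀ i j, 0 ≤ w i j) (hrow : ∀ i, ∑ j, w i j = 1) (hcol : ∀ j, ∑ i, w i j = 1)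
    {x y : ι → ℝ} (hx : ∀ i, 0 ≤ x i) (hy : ∀ i, 0 ≤ y i) :
    ∑ i, ∑ j, x i * y j * w i j ≤ (∑ i, x i ^ p) ^ (1 / p) * (∑ j, y j ^ q) ^ (1 / q) := by
  have h := Real.inner_le_Lp_mul_Lq_of_nonneg (Finset.univ : Finset (ι × ι)) hpq
    (f := fun z => x z.1 * w z.1 z.2 ^ (1 / p)) (g := fun z => y z.2 * w z.1 z.2 ^ (1 / q))
    (fun z _ => mul_nonneg (hx _) (Real.rpow_nonneg (hw _ _) _))
    (fun z _ => mul_nonneg (hy _) (Real.rpow_nonneg (hw _ _) _))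
  have hroot : ∀ {r : ℝ}, r ≠ 0 → ∀ {t s : ℝ}, 0 ≤ t → 0 ≤ s →
      (t * s ^ (1 / r)) ^ r = t ^ r * s := fun hr t s ht hs => by
    rw [Real.mul_rpow ht (Real.rpow_nonneg hs _), ← Real.rpow_mul hs, one_div_mul_cancel hr,
      Real.rpow_one]
  have hp : ∑ z : ι × ι, (x z.1 * w z.1 z.2 ^ (1 / p)) ^ p = ∑ i, x i ^ p := by
    simp only [hroot hpq.ne_zero (hx _) (hw _ _)]
    rw [Fintype.sum_prod_type]
    simp only [← Finset.mul_sum, hrow, mul_one]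
  have hq : ∑ z : ι × ι, (y z.2 * w z.1 z.2 ^ (1 / q)) ^ q = ∑ i, y i ^ q := by
    simp only [hroot hpq.symm.ne_zero (hy _) (hw _ _)]
    rw [Fintype.sum_prod_type_right]
    simp only [← Finset.mul_sum, hcol, mul_one]
  rw [hp, hq, Fintype.sum_prod_type] at h
  refine le_of_eq_of_le (Finset.sum_congr rfl fun i _ => Finset.sum_congr rfl fun j _ => ?_) h
  have hwij : w i j ^ (1 / p) * w i j ^ (1 / q) = w i j := by
    rw [← Real.rpow_add_of_nonneg (hw i j) hpq.one_div_nonneg hpq.symm.one_div_nonneg,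
      one_div, one_div, hpq.inv_add_inv_eq_one, Real.rpow_one]
  calc x i * y j * w i j = x i * y j * (w i j ^ (1 / p) * w i j ^ (1 / q)) := by rw [hwij]
    _ = _ := by ring

section

variable {ι : Type} [Fintype ι] [DecidableEq ι]

lemma opNorm_nonneg (a : Matrix ι ι ℂ) : 0 ≤ opNorm a := norm_nonneg _

lemma schattenNorm_nonneg (p : ℝ≥0∞) (a : Matrix ι ι ℂ) : 0 ≤ schattenNorm p a := by
  unfold schattenNorm
  split_ifs
  · exact opNorm_nonneg a
  · positivity

lemma opNorm_smul (c : ℂ) (a : Matrix ι ι ℂ) : opNorm (c • a) = ‖c‖ * opNorm a := by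
  simp [opNorm, norm_smul]

lemma norm_toLp_mulVec_le (g : Matrix ι ι ℂ) (v : ι → ℂ) :
    ‖WithLp.toLp 2 (g *ᵥ v)‖ ≤ opNorm g * ‖WithLp.toLp 2 v‖ :=
  ContinuousLinearMap.le_opNorm (LinearMap.toContinuousLinearMap (Matrix.toEuclideanLin g))
    (WithLp.toLp 2 v)

/-- The sesquilinear form of `g` is bounded by its operator norm. -/
lemma norm_star_dotProduct_mulVec_le (g : Matrix ι ι ℂ) (v w : ι → ℂ) :
    ‖star v ⬝ᵥ (g *ᵥ w)‖ ≤ ‖WithLp.toLp 2 v‖ * opNorm g * ‖WithLp.toLp 2 w‖ := by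
  have h := norm_inner_le_norm (𝕜 := ℂ) (WithLp.toLp 2 v) (WithLp.toLp 2 (g *ᵥ w))
  rw [EuclideanSpace.inner_eq_star_dotProduct, dotProduct_comm] at h
  refine h.trans ?_
  rw [mul_assoc]
  exact mul_le_mul_of_nonneg_left (norm_toLp_mulVec_le g w) (norm_nonneg _)

/-- The trace of a product of Hermitian matrices as a sum of products of eigenvalues weighted by
the squared moduli of the entries of a unitary matrix. -/
lemma trace_mul_eq_sum_eigenvalues {A B : Matrix ι ι ℂ} (hA : A.IsHermitian)
    (hB : B.IsHermitian) :
    ∃ w : ι → ι → ℝ, (∀ i j, 0 ≤ w i j) ∧ (∀ i, ∑ j, w i j = 1) ∧ (∀ j, ∑ i, w i j = 1) ∧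
      (A * B).trace.re = ∑ i, ∑ j, hA.eigenvalues i * hB.eigenvalues j * w i j := by
  set U := (hA.eigenvectorUnitary : Matrix ι ι ℂ)
  set V := (hB.eigenvectorUnitary : Matrix ι ι ℂ)
  have hUU : star U * U = 1 := Unitary.coe_star_mul_self _
  have hUU' : U * star U = 1 := Unitary.coe_mul_star_self _
  have hVV : star V * V = 1 := Unitary.coe_star_mul_self _
  have hVV' : V * star V = 1 := Unitary.coe_mul_star_self _
  set W := star U * V with hW
  have hWW : star W * W = 1 := by
    rw [hW, star_mul, star_star, mul_assoc, ← mul_assoc U, hUU', one_mul, hVV]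
  have hWW' : W * star W = 1 := by
    rw [hW, star_mul, star_star, mul_assoc, ← mul_assoc V, hVV', one_mul, hUU]
  refine ⟨fun i j => Complex.normSq (W i j), fun i j => Complex.normSq_nonneg _, fun i => ?_,
    fun j => ?_, ?_⟩
  · have h := congrFun₂ hWW' i i
    simp only [mul_apply, star_apply, one_apply_eq, RCLike.star_def, Complex.mul_conj] at h
    exact_mod_cast h
  · have h := congrFun₂ hWW j j
    simp only [mul_apply, star_apply, one_apply_eq, RCLike.star_def, mul_comm, Complex.mul_conj]
      at h
    exact_mod_cast h
  · have hA' : A = U * diagonal (fun i => (hA.eigenvalues i : ℂ)) * star U := hA.spectral_theorem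
    have hB' : B = V * diagonal (fun i => (hB.eigenvalues i : ℂ)) * star V := hB.spectral_theorem
    have key : (A * B).trace = (diagonal (fun i => (hA.eigenvalues i : ℂ)) * W *
        (diagonal (fun i => (hB.eigenvalues i : ℂ)) * star W)).trace := by
      conv_lhs => rw [hA', hB']
      rw [hW, star_mul, star_star, mul_assoc, mul_assoc, trace_mul_comm]
      simp only [mul_assoc]
    rw [key, trace, Complex.re_sum]
    refine Finset.sum_congr rfl fun i _ => ?_
    rw [diag_apply, mul_apply, Complex.re_sum]
    refine Finset.sum_congr rfl fun j _ => ?_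
    rw [diagonal_mul, diagonal_mul, star_apply, RCLike.star_def]
    rw [show (hA.eigenvalues i : ℂ) * W i j * (hB.eigenvalues j * (starRingEnd ℂ) (W i j)) =
      hA.eigenvalues i * hB.eigenvalues j * (W i j * (starRingEnd ℂ) (W i j)) by ring,
      Complex.mul_conj]
    norm_cast

lemma schattenNorm_two_mul_sq {p : ℝ≥0∞} (hp : p ≠ 0) (hp' : p ≠ ∞) (a : Matrix ι ι ℂ) :
    schattenNorm (2 * p) a ^ 2 =
      (∑ i, (posSemidef_conjTranspose_mul_self a).isHermitian.eigenvalues i ^ p.toReal) ^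
        (1 / p.toReal) := by
  have hpos : 0 < p.toReal := ENNReal.toReal_pos hp hp'
  have hnn := (posSemidef_conjTranspose_mul_self a).eigenvalues_nonneg
  rw [schattenNorm, if_neg (ENNReal.mul_ne_top ENNReal.ofNat_ne_top hp'), ← Real.rpow_natCast,
    ← Real.rpow_mul (by positivity), ENNReal.toReal_mul, ENNReal.toReal_ofNat]
  congr 1
  · refine Finset.sum_congr rfl fun i _ => ?_
    rw [Real.rpow_mul (Real.sqrt_nonneg _), Real.rpow_two, Real.sq_sqrt (hnn i)]
  · push_cast
    field_simp

lemma eigenvalues_conjTranspose_mul_self_le (a : Matrix ι ι ℂ) (i : ι) :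
    (posSemidef_conjTranspose_mul_self a).isHermitian.eigenvalues i ≤ opNorm a ^ 2 := by
  set h := (posSemidef_conjTranspose_mul_self a).isHermitian
  have hv : ‖WithLp.toLp 2 (h.eigenvectorBasis i).ofLp‖ = 1 := h.eigenvectorBasis.orthonormal.1 i
  have hle := norm_toLp_mulVec_le a (h.eigenvectorBasis i).ofLp
  rw [hv, mul_one] at hle
  refine le_trans (le_of_eq ?_) (pow_le_pow_left₀ (norm_nonneg _) hle 2)
  rw [h.eigenvalues_eq, ← mulVec_mulVec, dotProduct_mulVec, ← star_mulVec,
    ← inner_self_eq_norm_sq (𝕜 := ℂ), EuclideanSpace.inner_eq_star_dotProduct, dotProduct_comm]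

/-- Hölder's inequality for the trace of a product of two positive semidefinite matrices, whose
spectra are described by the squared singular values of `d` and `b`. -/
lemma re_trace_mul_le {p q : ℝ≥0∞} (hpq : p⁻¹ + q⁻¹ = 1) {A B d b : Matrix ι ι ℂ}
    (hA : A.PosSemidef) (hB : B.PosSemidef) (hAd : A.charpoly = (dᴴ * d).charpoly)
    (hBb : B.charpoly = (bᴴ * b).charpoly) :
    (A * B).trace.re ≤ schattenNorm (2 * p) d ^ 2 * schattenNorm (2 * q) b ^ 2 := by
  have top_case : ∀ {A B d b : Matrix ι ι ℂ}, A.PosSemidef → B.PosSemidef →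
      A.charpoly = (dᴴ * d).charpoly → B.charpoly = (bᴴ * b).charpoly →
      (A * B).trace.re ≤ schattenNorm (2 * ∞) d ^ 2 * schattenNorm (2 * 1) b ^ 2 := by
    intro A B d b hA hB hAd hBb
    obtain ⟨w, hw, -, hcol, htr⟩ := trace_mul_eq_sum_eigenvalues hA.isHermitian hB.isHermitian
    have hd := (hA.isHermitian.eigenvalues_eq_eigenvalues_iff
      (posSemidef_conjTranspose_mul_self d).isHermitian).2 hAd
    have hb := (hB.isHermitian.eigenvalues_eq_eigenvalues_iff
      (posSemidef_conjTranspose_mul_self b).isHermitian).2 hBb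
    rw [schattenNorm_two_mul_sq one_ne_zero ENNReal.one_ne_top, schattenNorm, if_pos (by simp),
      htr, hd, ← hb, Finset.sum_comm]
    simp only [ENNReal.toReal_one, Real.rpow_one, div_one, Finset.mul_sum]
    refine Finset.sum_le_sum fun j _ => ?_
    calc _ ≤ ∑ i, opNorm d ^ 2 * hB.isHermitian.eigenvalues j * w i j := by
          refine Finset.sum_le_sum fun i _ => mul_le_mul_of_nonneg_right
            (mul_le_mul_of_nonneg_right (eigenvalues_conjTranspose_mul_self_le d i)
              (hB.eigenvalues_nonneg j)) (hw i j)
      _ = _ := by rw [← Finset.mul_sum, hcol, mul_one]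
  rcases eq_or_ne p ∞ with rfl | hp
  · obtain rfl : q = 1 := by simpa using hpq
    exact top_case hA hB hAd hBb
  rcases eq_or_ne q ∞ with rfl | hq
  · obtain rfl : p = 1 := by simpa using hpq
    rw [trace_mul_comm, mul_comm (_ ^ 2)]
    exact top_case hB hA hBb hAd
  have hp0 : p ≠ 0 := by rintro rfl; simp at hpq
  have hq0 : q ≠ 0 := by rintro rfl; simp at hpq
  have hconj : p.toReal.HolderConjugate q.toReal := by
    refine ⟨?_, ENNReal.toReal_pos hp0 hp, ENNReal.toReal_pos hq0 hq⟩
    rw [← ENNReal.toReal_inv, ← ENNReal.toReal_inv, ← ENNReal.toReal_add (by simpa) (by simpa), hpq]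
    simp
  obtain ⟨w, hw, hrow, hcol, htr⟩ := trace_mul_eq_sum_eigenvalues hA.isHermitian hB.isHermitian
  rw [schattenNorm_two_mul_sq hp0 hp, schattenNorm_two_mul_sq hq0 hq, htr,
    ← (hA.isHermitian.eigenvalues_eq_eigenvalues_iff
      (posSemidef_conjTranspose_mul_self d).isHermitian).2 hAd,
    ← (hB.isHermitian.eigenvalues_eq_eigenvalues_iff
      (posSemidef_conjTranspose_mul_self b).isHermitian).2 hBb]
  exact sum_mul_mul_doublyStochastic_le hconj hw hrow hcol hA.eigenvalues_nonneg
    hB.eigenvalues_nonneg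

end

lemma norm_toLp_uncurry_sq {ι κ : Type} [Fintype ι] [Fintype κ] (f : ι × κ → ℂ) :
    ‖WithLp.toLp 2 f‖ ^ 2 = ∑ i, ∑ j, ‖f (i, j)‖ ^ 2 := by
  rw [EuclideanSpace.norm_sq_eq, Fintype.sum_prod_type]

lemma sum_norm_sq_eq_re_trace {ι : Type} [Fintype ι] (M : Matrix ι ι ℂ) :
    ∑ i, ∑ j, ‖M i j‖ ^ 2 = (Mᴴ * M).trace.re := by
  rw [trace, Complex.re_sum, Finset.sum_comm]
  refine Finset.sum_congr rfl fun i _ => ?_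
  rw [diag_apply, mul_apply, Complex.re_sum]
  refine Finset.sum_congr rfl fun j _ => ?_
  rw [conjTranspose_apply, RCLike.star_def, ← Complex.normSq_eq_conj_mul_self, Complex.ofReal_re,
    Complex.normSq_eq_norm_sq]

/-- The unnormalized maximally entangled vector `∑ i, e_i ⊗ e_i`. -/
def diagVec (k : ℕ) : Fin k × Fin k → ℂ := fun z => if z.1 = z.2 then 1 else 0

lemma tracePair_eq_dotProduct {k : ℕ} (z : Matrix (Fin k × Fin k) (Fin k × Fin k) ℂ) :
    tracePair z = star (diagVec k) ⬝ᵥ (z *ᵥ diagVec k) := by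
  simp [tracePair, diagVec, dotProduct, mulVec, Fintype.sum_prod_type]

lemma kronecker_mulVec_diagVec {k : ℕ} (d b : Matrix (Fin k) (Fin k) ℂ) (z : Fin k × Fin k) :
    ((d ⊗ₖ b) *ᵥ diagVec k) z = (d * bᵀ) z.1 z.2 := by
  simp [diagVec, dotProduct, mulVec, mul_apply, Fintype.sum_prod_type]

lemma star_dotProduct_mul_mul_mulVec {ι : Type} [Fintype ι] (c g d : Matrix ι ι ℂ) (v w : ι → ℂ) :
    star v ⬝ᵥ ((c * g * d) *ᵥ w) = star (cᴴ *ᵥ v) ⬝ᵥ (g *ᵥ (d *ᵥ w)) := by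
  rw [star_mulVec, conjTranspose_conjTranspose, ← dotProduct_mulVec, mulVec_mulVec, mulVec_mulVec]

lemma norm_kronecker_mulVec_diagVec_le {p q : ℝ≥0∞} (hpq : p⁻¹ + q⁻¹ = 1) {k : ℕ}
    {d b d' b' : Matrix (Fin k) (Fin k) ℂ} (hd : (dᴴ * d).charpoly = (d'ᴴ * d').charpoly)
    (hb : (bᴴ * b).charpoly = (b'ᴴ * b').charpoly) :
    ‖WithLp.toLp 2 ((d ⊗ₖ b) *ᵥ diagVec k)‖ ≤ schattenNorm (2 * p) d' * schattenNorm (2 * q) b' := by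
  refine (sq_le_sq₀ (norm_nonneg _)
    (mul_nonneg (schattenNorm_nonneg _ _) (schattenNorm_nonneg _ _))).1 ?_
  rw [norm_toLp_uncurry_sq]
  simp only [kronecker_mulVec_diagVec]
  rw [sum_norm_sq_eq_re_trace, conjTranspose_mul, mul_assoc, trace_mul_comm, mul_pow,
    ← mul_assoc, mul_assoc]
  refine re_trace_mul_le hpq (posSemidef_conjTranspose_mul_self d)
    (posSemidef_self_mul_conjTranspose bᵀ) hd ?_
  rw [← hb, ← charpoly_transpose (bᴴ * b), transpose_mul]
  rfl

lemma norm_tracePair_mul_mul_le {p q : ℝ≥0∞} (hpq : p⁻¹ + q⁻¹ = 1) {k : ℕ}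
    (c α d β : Matrix (Fin k) (Fin k) ℂ) (z : Matrix (Fin k × Fin k) (Fin k × Fin k) ℂ) :
    ‖tracePair ((c ⊗ₖ α) * z * (d ⊗ₖ β))‖ ≤
      schattenNorm (2 * p) c * opNorm z * schattenNorm (2 * p) d *
        (schattenNorm (2 * q) α * schattenNorm (2 * q) β) := by
  rw [tracePair_eq_dotProduct, star_dotProduct_mul_mul_mulVec, conjTranspose_kronecker]
  refine (norm_star_dotProduct_mulVec_le _ _ _).trans ?_
  have hl := norm_kronecker_mulVec_diagVec_le hpq (d := cᴴ) (b := αᴴ) (d' := c) (b' := α)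
    (by rw [conjTranspose_conjTranspose, charpoly_mul_comm])
    (by rw [conjTranspose_conjTranspose, charpoly_mul_comm])
  have hr := norm_kronecker_mulVec_diagVec_le hpq (d := d) (b := β) rfl rfl
  have hz := opNorm_nonneg z
  have hc := schattenNorm_nonneg (2 * p) c
  have hα := schattenNorm_nonneg (2 * q) α
  calc _ ≤ schattenNorm (2 * p) c * schattenNorm (2 * q) α * opNorm z *
        (schattenNorm (2 * p) d * schattenNorm (2 * q) β) := by gcongr
    _ = _ := by ring

lemma le_csInf_mul {S : Set ℝ} (hS : S.Nonempty) {t k : ℝ} (hk : 0 ≤ k)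
    (h : ∀ r ∈ S, t ≤ r * k) : t ≤ sInf S * k := by
  rcases hk.eq_or_lt with rfl | hk
  · obtain ⟨r, hr⟩ := hS
    simpa using h r hr
  · rw [← div_le_iff₀ hk]
    exact le_csInf hS fun r hr => (div_le_iff₀ hk).2 (h r hr)

lemma le_pisierNorm_mul {p : ℝ≥0∞} {N n : ℕ} {x : Matrix (Fin N × Fin n) (Fin N × Fin n) ℂ}
    {t k : ℝ} (hk : 0 ≤ k)
    (h : ∀ (a b : Matrix (Fin N) (Fin N) ℂ) (y : Matrix (Fin N × Fin n) (Fin N × Fin n) ℂ),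
      x = (a ⊗ₖ (1 : Matrix (Fin n) (Fin n) ℂ)) * y * (b ⊗ₖ (1 : Matrix (Fin n) (Fin n) ℂ)) →
      t ≤ schattenNorm (2 * p) a * opNorm y * schattenNorm (2 * p) b * k) :
    t ≤ pisierNorm p x * k := by
  unfold pisierNorm
  refine le_csInf_mul ?_ hk ?_
  · exact ⟨_, 1, 1, x, by simp, rfl⟩
  rintro r ⟨a, b, y, hx, rfl⟩
  exact h a b y hx

lemma le_rho_mul {p q : ℝ≥0∞} {n m : ℕ} {a : Matrix (Fin n × Fin m) (Fin n × Fin m) ℂ}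
    {t k : ℝ} (hk : 0 ≤ k)
    (h : ∀ (γ δ : Matrix (Fin n) (Fin n) ℂ) (α β : Matrix (Fin m) (Fin m) ℂ)
      (g : Matrix (Fin n × Fin m) (Fin n × Fin m) ℂ), a = (γ ⊗ₖ α) * g * (δ ⊗ₖ β) →
      t ≤ schattenNorm (2 * p) γ * schattenNorm (2 * q) α * opNorm g *
          schattenNorm (2 * p) δ * schattenNorm (2 * q) β * k) :
    t ≤ rho p q a * k := by
  unfold rho
  refine le_csInf_mul ?_ hk ?_
  · exact ⟨_, 1, 1, 1, 1, a, by simp, rfl⟩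
  rintro r ⟨γ, δ, α, β, g, ha, rfl⟩
  exact h γ δ α β g ha

lemma rho_mul_mul_le (p q : ℝ≥0∞) {n m : ℕ} (γ δ : Matrix (Fin n) (Fin n) ℂ)
    (α β : Matrix (Fin m) (Fin m) ℂ) (g : Matrix (Fin n × Fin m) (Fin n × Fin m) ℂ) :
    rho p q ((γ ⊗ₖ α) * g * (δ ⊗ₖ β)) ≤ schattenNorm (2 * p) γ * schattenNorm (2 * q) α *
      opNorm g * schattenNorm (2 * p) δ * schattenNorm (2 * q) β := by
  unfold rho
  refine csInf_le ⟨0, ?_⟩ ⟨γ, δ, α, β, g, rfl, rfl⟩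
  rintro r ⟨γ, δ, α, β, g, -, rfl⟩
  exact mul_nonneg (mul_nonneg (mul_nonneg (mul_nonneg (schattenNorm_nonneg _ _)
    (schattenNorm_nonneg _ _)) (opNorm_nonneg _)) (schattenNorm_nonneg _ _))
    (schattenNorm_nonneg _ _)

lemma one_kronecker_mul_kronecker_one_mul {k l : ℕ} (c d : Matrix (Fin k) (Fin k) ℂ)
    (α β : Matrix (Fin l) (Fin l) ℂ) (z : Matrix (Fin k × Fin l) (Fin k × Fin l) ℂ) :
    ((1 : Matrix (Fin k) (Fin k) ℂ) ⊗ₖ α) * ((c ⊗ₖ (1 : Matrix (Fin l) (Fin l) ℂ)) * z *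
      (d ⊗ₖ (1 : Matrix (Fin l) (Fin l) ℂ))) * ((1 : Matrix (Fin k) (Fin k) ℂ) ⊗ₖ β) =
      (c ⊗ₖ α) * z * (d ⊗ₖ β) := by
  have hl : (1 : Matrix (Fin k) (Fin k) ℂ) ⊗ₖ α * c ⊗ₖ (1 : Matrix (Fin l) (Fin l) ℂ) =
      c ⊗ₖ α := by rw [← mul_kronecker_mul, one_mul, mul_one]
  have hr : d ⊗ₖ (1 : Matrix (Fin l) (Fin l) ℂ) * (1 : Matrix (Fin k) (Fin k) ℂ) ⊗ₖ β =
      d ⊗ₖ β := by rw [← mul_kronecker_mul, one_mul, mul_one]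
  rw [← hl, ← hr]
  simp only [mul_assoc]

lemma norm_tracePair_one_kronecker_le {p q : ℝ≥0∞} (hpq : p⁻¹ + q⁻¹ = 1) {k : ℕ}
    (α β : Matrix (Fin k) (Fin k) ℂ) (y : Matrix (Fin k × Fin k) (Fin k × Fin k) ℂ) :
    ‖tracePair (((1 : Matrix (Fin k) (Fin k) ℂ) ⊗ₖ α) * y *
        ((1 : Matrix (Fin k) (Fin k) ℂ) ⊗ₖ β))‖ ≤
      pisierNorm p y * (schattenNorm (2 * q) α * schattenNorm (2 * q) β) := by
  refine le_pisierNorm_mul (mul_nonneg (schattenNorm_nonneg _ _) (schattenNorm_nonneg _ _)) ?_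
  rintro c d z rfl
  rw [one_kronecker_mul_kronecker_one_mul]
  exact norm_tracePair_mul_mul_le hpq c α d β z

lemma one_kronecker_mul_mul_apply {k l : ℕ} (α β : Matrix (Fin l) (Fin l) ℂ)
    (x : Matrix (Fin k × Fin l) (Fin k × Fin l) ℂ) (I J : Fin k × Fin l) :
    (((1 : Matrix (Fin k) (Fin k) ℂ) ⊗ₖ α) * x * ((1 : Matrix (Fin k) (Fin k) ℂ) ⊗ₖ β)) I J =
      ∑ s, ∑ t, (α I.2 s * β t J.2) * x (I.1, s) (J.1, t) := by
  have hl : ∀ K, (((1 : Matrix (Fin k) (Fin k) ℂ) ⊗ₖ α) * x) I K =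
      ∑ s, α I.2 s * x (I.1, s) K := fun K => by
    simp [mul_apply, Fintype.sum_prod_type, one_apply]
  have hr : ∀ y : Matrix (Fin k × Fin l) (Fin k × Fin l) ℂ,
      (y * ((1 : Matrix (Fin k) (Fin k) ℂ) ⊗ₖ β)) I J = ∑ t, y I (J.1, t) * β t J.2 := fun y => by
    simp [mul_apply, Fintype.sum_prod_type_right, one_apply]
  simp only [hr, hl, Finset.sum_mul]
  rw [Finset.sum_comm]
  refine Finset.sum_congr rfl fun s _ => Finset.sum_congr rfl fun t _ => ?_
  ring

lemma amp_one_kronecker_mul_mul {n m l : ℕ}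
    (u : Matrix (Fin n) (Fin n) ℂ →ₗ[ℂ] Matrix (Fin m) (Fin m) ℂ) (α β : Matrix (Fin l) (Fin l) ℂ)
    (x : Matrix (Fin n × Fin l) (Fin n × Fin l) ℂ) :
    amp u (((1 : Matrix (Fin n) (Fin n) ℂ) ⊗ₖ α) * x * ((1 : Matrix (Fin n) (Fin n) ℂ) ⊗ₖ β)) =
      ((1 : Matrix (Fin m) (Fin m) ℂ) ⊗ₖ α) * amp u x * ((1 : Matrix (Fin m) (Fin m) ℂ) ⊗ₖ β) := by
  ext I J
  have hblock : (of fun i j => (((1 : Matrix (Fin n) (Fin n) ℂ) ⊗ₖ α) * x *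
        ((1 : Matrix (Fin n) (Fin n) ℂ) ⊗ₖ β)) (i, I.2) (j, J.2)) =
      ∑ s, ∑ t, (α I.2 s * β t J.2) • of fun i j => x (i, s) (j, t) := by
    ext i j
    simp [one_kronecker_mul_mul_apply, Matrix.sum_apply]
  rw [one_kronecker_mul_mul_apply, amp, of_apply, hblock]
  simp only [map_sum, map_smul, Matrix.sum_apply, Matrix.smul_apply, smul_eq_mul, amp, of_apply]

lemma amp_smul {n m l : ℕ} (u : Matrix (Fin n) (Fin n) ℂ →ₗ[ℂ] Matrix (Fin m) (Fin m) ℂ) (c : ℂ)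
    (x : Matrix (Fin n × Fin l) (Fin n × Fin l) ℂ) : amp u (c • x) = c • amp u x := by
  ext I J
  have hblock : (of fun i j => (c • x) (i, I.2) (j, J.2)) = c • of fun i j => x (i, I.2) (j, J.2) :=
    rfl
  rw [amp, of_apply, hblock, map_smul]
  rfl

lemma tracePair_smul {k : ℕ} (c : ℂ) (z : Matrix (Fin k × Fin k) (Fin k × Fin k) ℂ) :
    tracePair (c • z) = c * tracePair z := by
  simp [tracePair, Finset.mul_sum]

lemma sum_norm_sq_le_schattenNorm {p q : ℝ≥0∞} (hpq : p⁻¹ + q⁻¹ = 1) {k : ℕ}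
    (a : Matrix (Fin k) (Fin k) ℂ) :
    ∑ i, ∑ j, ‖a i j‖ ^ 2 ≤
      schattenNorm (2 * p) a ^ 2 * schattenNorm (2 * q) (1 : Matrix (Fin k) (Fin k) ℂ) ^ 2 := by
  have h := re_trace_mul_le hpq (posSemidef_conjTranspose_mul_self a) PosSemidef.one
    (d := a) (b := 1) rfl (by simp)
  rwa [mul_one, ← sum_norm_sq_eq_re_trace] at h

lemma norm_kronecker_mulVec_single_sq_le {k l : ℕ} (d : Matrix (Fin k) (Fin k) ℂ)
    (b : Matrix (Fin l) (Fin l) ℂ) (J : Fin k × Fin l) :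
    ‖WithLp.toLp 2 ((d ⊗ₖ b) *ᵥ Pi.single J 1)‖ ^ 2 ≤
      (∑ i, ∑ j, ‖d i j‖ ^ 2) * ∑ i, ∑ j, ‖b i j‖ ^ 2 := by
  rw [norm_toLp_uncurry_sq]
  simp only [mulVec_single_one, col_apply, kroneckerMap_apply, norm_mul, mul_pow]
  rw [← Finset.sum_mul_sum]
  gcongr with i _ i _
  · exact Finset.single_le_sum (f := fun j => ‖d i j‖ ^ 2) (fun _ _ => by positivity)
      (Finset.mem_univ J.1)
  · exact Finset.single_le_sum (f := fun j => ‖b i j‖ ^ 2) (fun _ _ => by positivity)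
      (Finset.mem_univ J.2)

/-- Every entry of a matrix is bounded by a multiple of its `ρ_p` norm. -/
lemma norm_apply_le_rho_mul {p q : ℝ≥0∞} (hpq : p⁻¹ + q⁻¹ = 1) {n m : ℕ}
    (a : Matrix (Fin n × Fin m) (Fin n × Fin m) ℂ) (I J : Fin n × Fin m) :
    ‖a I J‖ ≤ rho p q a * (schattenNorm (2 * q) (1 : Matrix (Fin n) (Fin n) ℂ) *
      schattenNorm (2 * p) (1 : Matrix (Fin m) (Fin m) ℂ)) ^ 2 := by
  refine le_rho_mul (sq_nonneg _) ?_
  rintro γ δ α β g rfl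
  have hqp : q⁻¹ + p⁻¹ = 1 := by rwa [add_comm]
  have hflip : ∀ {k : ℕ} (a : Matrix (Fin k) (Fin k) ℂ),
      ∑ i, ∑ j, ‖aᴴ i j‖ ^ 2 = ∑ i, ∑ j, ‖a i j‖ ^ 2 := fun a => by
    rw [Finset.sum_comm]
    simp
  have hentry : ∀ M : Matrix (Fin n × Fin m) (Fin n × Fin m) ℂ,
      M I J = star (Pi.single I 1 : Fin n × Fin m → ℂ) ⬝ᵥ (M *ᵥ Pi.single J 1) := fun M => by
    rw [← Pi.single_star, star_one, single_one_dotProduct, mulVec_single_one, col_apply]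
  have hvec : ∀ (d : Matrix (Fin n) (Fin n) ℂ) (b : Matrix (Fin m) (Fin m) ℂ) (v : ℝ), 0 ≤ v →
      v ^ 2 ≤ (∑ i, ∑ j, ‖d i j‖ ^ 2) * ∑ i, ∑ j, ‖b i j‖ ^ 2 →
      v ≤ schattenNorm (2 * p) d * schattenNorm (2 * q) b *
        (schattenNorm (2 * q) (1 : Matrix (Fin n) (Fin n) ℂ) *
          schattenNorm (2 * p) (1 : Matrix (Fin m) (Fin m) ℂ)) := by
    intro d b v hv h
    have h0 := schattenNorm_nonneg (2 * p) d
    have h1 := schattenNorm_nonneg (2 * q) b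
    have h2 := schattenNorm_nonneg (2 * q) (1 : Matrix (Fin n) (Fin n) ℂ)
    have h3 := schattenNorm_nonneg (2 * p) (1 : Matrix (Fin m) (Fin m) ℂ)
    refine (sq_le_sq₀ (by positivity) (by positivity)).1 ?_
    refine h.trans ((mul_le_mul (sum_norm_sq_le_schattenNorm hpq d)
      (sum_norm_sq_le_schattenNorm hqp b) (by positivity) (by positivity)).trans_eq ?_)
    ring
  rw [hentry (_ * _ * _), star_dotProduct_mul_mul_mulVec, conjTranspose_kronecker]
  refine (norm_star_dotProduct_mulVec_le _ _ _).trans ?_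
  have hl := hvec γ α _ (norm_nonneg _)
    ((norm_kronecker_mulVec_single_sq_le γᴴ αᴴ I).trans_eq (by rw [hflip, hflip]))
  have hr := hvec δ β _ (norm_nonneg _) (norm_kronecker_mulVec_single_sq_le δ β J)
  have hg := opNorm_nonneg g
  refine (mul_le_mul (mul_le_mul_of_nonneg_right hl hg) hr (norm_nonneg _)
    (mul_nonneg ((norm_nonneg _).trans hl) hg)).trans_eq ?_
  ring

lemma ofReal_norm_tracePair_amp_le_of_factorization {n m : ℕ} {p q : ℝ≥0∞} (hpq : p⁻¹ + q⁻¹ = 1)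
    (u : Matrix (Fin n) (Fin n) ℂ →ₗ[ℂ] Matrix (Fin (m + 1)) (Fin (m + 1)) ℂ)
    (γ δ : Matrix (Fin n) (Fin n) ℂ) (α β : Matrix (Fin (m + 1)) (Fin (m + 1)) ℂ)
    (g : Matrix (Fin n × Fin (m + 1)) (Fin n × Fin (m + 1)) ℂ)
    (hR : 0 < schattenNorm (2 * p) γ * opNorm g * schattenNorm (2 * p) δ) :
    ENNReal.ofReal ‖tracePair (amp u ((γ ⊗ₖ α) * g * (δ ⊗ₖ β)))‖ ≤
      ENNReal.ofReal (schattenNorm (2 * p) γ * schattenNorm (2 * q) α * opNorm g *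
          schattenNorm (2 * p) δ * schattenNorm (2 * q) β) * regNorm p u := by
  set R := schattenNorm (2 * p) γ * opNorm g * schattenNorm (2 * p) δ with hRdef
  set K := schattenNorm (2 * q) α * schattenNorm (2 * q) β with hK
  have hK0 : 0 ≤ K := mul_nonneg (schattenNorm_nonneg _ _) (schattenNorm_nonneg _ _)
  set x := (γ ⊗ₖ (1 : Matrix (Fin (m + 1)) (Fin (m + 1)) ℂ)) * (((R⁻¹ : ℝ) : ℂ) • g) *
    (δ ⊗ₖ (1 : Matrix (Fin (m + 1)) (Fin (m + 1)) ℂ)) with hx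
  have hxnorm : pisierNorm p x ≤ 1 := by
    refine csInf_le ⟨0, ?_⟩ ⟨γ, δ, _, hx, ?_⟩
    · rintro r ⟨a, b, y, -, rfl⟩
      exact mul_nonneg (mul_nonneg (schattenNorm_nonneg _ _) (opNorm_nonneg _))
        (schattenNorm_nonneg _ _)
    · rw [opNorm_smul, Complex.norm_real, Real.norm_of_nonneg (inv_nonneg.2 hR.le)]
      rw [show schattenNorm (2 * p) γ * (R⁻¹ * opNorm g) * schattenNorm (2 * p) δ = R⁻¹ * R by
        rw [hRdef]; ring, inv_mul_cancel₀ hR.ne']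
  have hreg : ENNReal.ofReal (pisierNorm p (amp u x)) ≤ regNorm p u :=
    le_iSup_of_le m (le_iSup_of_le x (le_iSup_of_le hxnorm le_rfl))
  have hfac : (γ ⊗ₖ α) * g * (δ ⊗ₖ β) = (R : ℂ) • (((1 : Matrix (Fin n) (Fin n) ℂ) ⊗ₖ α) * x *
      ((1 : Matrix (Fin n) (Fin n) ℂ) ⊗ₖ β)) := by
    have hR' : (R : ℂ) ≠ 0 := by exact_mod_cast hR.ne'
    rw [hx, one_kronecker_mul_kronecker_one_mul, mul_smul_comm, smul_mul_assoc, smul_smul,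
      Complex.ofReal_inv, mul_inv_cancel₀ hR', one_smul]
  rw [hfac, amp_smul, amp_one_kronecker_mul_mul, tracePair_smul, norm_mul, Complex.norm_real,
    Real.norm_of_nonneg hR.le]
  have hT := norm_tracePair_one_kronecker_le hpq α β (amp u x)
  calc _ ≤ ENNReal.ofReal (R * K * pisierNorm p (amp u x)) := by
        refine ENNReal.ofReal_le_ofReal ?_
        rw [mul_assoc R, mul_comm K]
        exact mul_le_mul_of_nonneg_left hT hR.le
    _ = ENNReal.ofReal (R * K) * ENNReal.ofReal (pisierNorm p (amp u x)) :=
        ENNReal.ofReal_mul (mul_nonneg hR.le hK0)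
    _ ≤ ENNReal.ofReal (R * K) * regNorm p u := by gcongr
    _ = _ := by
        congr 2
        rw [hRdef, hK]
        ring

/-- The claim established in the proof of Theorem 3.2:
`|T((u ⊗ id_{M_m})(a))| ≤ ρ_p(a) · ‖u‖_r`. -/
theorem abs_trace_pairing_amp_le {n m : ℕ} (p q : ℝ≥0∞) (hp : 1 ≤ p) (hpq : p⁻¹ + q⁻¹ = 1)
    (u : Matrix (Fin n) (Fin n) ℂ →ₗ[ℂ] Matrix (Fin m) (Fin m) ℂ)
    (a : Matrix (Fin n × Fin m) (Fin n × Fin m) ℂ) :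
    ENNReal.ofReal ‖tracePair (amp (⇑u) a)‖ ≤ ENNReal.ofReal (rho p q a) * regNorm p (⇑u) := by
  rcases m with _ | m
  · simp [tracePair]
  rcases le_or_gt (rho p q a) 0 with hrho | hrho
  · have ha : a = (0 : ℂ) • a := by
      ext I J
      have h := (norm_apply_le_rho_mul hpq a I J).trans
        (mul_nonpos_of_nonpos_of_nonneg hrho (sq_nonneg _))
      simpa using h
    rw [ha, amp_smul, tracePair_smul]
    simp
  rcases eq_or_ne (regNorm p u) ∞ with hreg | hreg
  · rw [hreg, ENNReal.mul_top (by simpa using hrho)]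
    exact le_top
  rw [← ENNReal.ofReal_toReal hreg, ← ENNReal.ofReal_mul hrho.le]
  refine ENNReal.ofReal_le_ofReal (le_rho_mul ENNReal.toReal_nonneg ?_)
  rintro γ δ α β g rfl
  have hpos : 0 < schattenNorm (2 * p) γ * schattenNorm (2 * q) α * opNorm g *
      schattenNorm (2 * p) δ * schattenNorm (2 * q) β :=
    hrho.trans_le (rho_mul_mul_le p q γ δ α β g)
  have hR : 0 < schattenNorm (2 * p) γ * opNorm g * schattenNorm (2 * p) δ := by
    refine lt_of_le_of_ne (mul_nonneg (mul_nonneg (schattenNorm_nonneg _ _) (opNorm_nonneg _))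
      (schattenNorm_nonneg _ _)) fun h => hpos.ne' ?_
    calc _ = schattenNorm (2 * p) γ * opNorm g * schattenNorm (2 * p) δ *
          (schattenNorm (2 * q) α * schattenNorm (2 * q) β) := by ring
      _ = 0 := by rw [← h, zero_mul]
  have h := ofReal_norm_tracePair_amp_le_of_factorization hpq u γ δ α β g hR
  rwa [← ENNReal.ofReal_toReal hreg, ← ENNReal.ofReal_mul hpos.le,
    ENNReal.ofReal_le_ofReal_iff (mul_nonneg hpos.le ENNReal.toReal_nonneg)] at h
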